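/- arXiv:1111.2901 — 2 statements merged into one kernel-verified Lean document; each statement's English description precedes it below -/
import Mathlib

section
/- A left self-injective semiprimary ring A whose quotient A/Jac(A) has cardinality at most ℵ₀ is quasi-Frobenius. -/
open Cardinal

/-- A ring is *semiprimary* if its Jacobson radical `J` is nilpotent
(`J ^ n = 0`, expressed elementwise: every product of `n` elements of `J` vanishes)
and the quotient ring `A / J` is a semisimple ring. -/
def IsSemiprimary (A : Type*) [Ring A] : Prop :=
  IsSemisimpleRing (RingCon.Quotient (⊥ : TwoSidedIdeal A).jacobson.ringCon) ∧
  ∃ n : ℕ, 0 < n ∧ ∀ f : Fin n → A,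
    (∀ i, f i ∈ Ideal.jacobson (⊥ : Ideal A)) → (List.ofFn f).prod = 0

/-- A ring is *quasi-Frobenius* if it is left self-injective and left artinian. -/
def IsQuasiFrobenius (A : Type*) [Ring A] : Prop :=
  Module.Injective A A ∧ IsArtinianRing A

/-!
Let `J` be the Jacobson radical of `A`. It is enough to show that `J` is finitely generated as a
left ideal, because a semiprimary ring with this property is left artinian.

Self-injectivity makes every map from a left ideal to `A` a right multiplication. Hence isomorphic
left ideals annihilate the same left ideals from the left. An element annihilated by all minimal
left ideals lies in `J`, so each block of the semisimple ring `A / J` fails to be annihilated by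
some minimal left ideal. A minimal left ideal fails to annihilate at most one block, since the
product of two different blocks is zero modulo `J`. As there are as many isomorphism classes of
simple modules as blocks, and finitely many of each, every simple module embeds in `A`.

Now let `κ` be the least number of generators of `J`, and suppose it is infinite. The semisimple
module `J / J²` has at least `κ` simple summands, and each of them has at least two maps to `A`, so
there are at least `2 ^ κ` maps `J → A`; as these are right multiplications, `2 ^ κ ≤ #A`. On the
other hand `A` is filtered by the powers of `J`, each generated by at most `κ` elements, so
`#A ≤ max #(A / J) κ`. Hence `2 ^ ℵ₀ ≤ 2 ^ κ ≤ #(A / J)`.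
-/

section SimpleSubmodules

variable (A : Type*) [Ring A] [IsSemiprimaryRing A]

theorem exists_isSimpleModule_submodule (M : Type*) [AddCommGroup M] [Module A M] [Nontrivial M] :
    ∃ S : Submodule A M, IsSimpleModule A S := by
  suffices Nontrivial M → ∃ S : Submodule A M, IsSimpleModule A S from this ‹_›
  refine IsSemiprimaryRing.induction A A M
    (P := fun M ↦ Nontrivial M → ∃ S : Submodule A M, IsSimpleModule A S) ?_ ?_
  · intro M _ _ _ _ _ _ _
    exact IsSemisimpleModule.exists_simple_submodule A M
  · intro M _ _ _ _ N hN hQ _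
    by_cases h : N = ⊥
    · let e : (M ⧸ N) ≃ₗ[A] M := N.quotEquivOfEqBot h
      obtain ⟨S, _⟩ := hQ e.toEquiv.nontrivial
      exact ⟨S.map e.toLinearMap, .congr (e.submoduleMap S).symm⟩
    · obtain ⟨S, _⟩ := hN (N.nontrivial_iff_ne_bot.2 h)
      exact ⟨S.map N.subtype, .congr (S.equivMapOfInjective _ N.injective_subtype).symm⟩

theorem isAtomic_submodule (M : Type*) [AddCommGroup M] [Module A M] :
    IsAtomic (Submodule A M) where
  eq_bot_or_exists_atom_le N := by
    refine or_iff_not_imp_left.2 fun hN ↦ ?_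
    have := N.nontrivial_iff_ne_bot.2 hN
    obtain ⟨S, _⟩ := exists_isSimpleModule_submodule A N
    have : IsSimpleModule A (S.map N.subtype) :=
      .congr (S.equivMapOfInjective _ N.injective_subtype).symm
    exact ⟨S.map N.subtype, isSimpleModule_iff_isAtom.1 this, N.map_subtype_le S⟩

end SimpleSubmodules

theorem mul_eq_bot_iff_forall {A : Type*} [Ring A] {I K : Ideal A} :
    I * K = ⊥ ↔ ∀ i ∈ I, ∀ k ∈ K, i * k = 0 := by
  simp only [← le_bot_iff, Ideal.mul_le, Ideal.mem_bot]

theorem isUnit_one_add_of_mem_jacobson {A : Type*} [Ring A] {a : A} (ha : a ∈ Ring.jacobson A) :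
    IsUnit (1 + a) := by
  have exists_left_inv {b : A} (hb : b ∈ Ring.jacobson A) : ∃ c, c * (1 + b) = 1 := by
    rw [← Ideal.jacobson_bot, Ideal.mem_jacobson_iff] at hb
    obtain ⟨c, hc⟩ := hb 1
    rw [Ideal.mem_bot, mul_one, sub_eq_zero] at hc
    exact ⟨c, by rw [mul_add, mul_one, add_comm, hc]⟩
  obtain ⟨c, hc⟩ := exists_left_inv ha
  have hc' : c = 1 + -(c * a) := by rw [← hc]; noncomm_ring
  obtain ⟨d, hd⟩ := exists_left_inv (neg_mem (Ideal.mul_mem_left _ c ha))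
  rw [← hc'] at hd
  exact ⟨⟨1 + a, c, left_inv_eq_right_inv hd hc ▸ hd, hc⟩, rfl⟩

section SelfInjective

variable {A : Type*} [Ring A]

/-- Right multiplication by an element of a ring, as a linear map out of a left ideal; over a left
self-injective ring every linear map from a left ideal to the ring is of this form. -/
def mulRightOn (U : Ideal A) (a : A) : U →ₗ[A] A :=
  (LinearMap.toSpanSingleton A A a).domRestrict U

theorem injective_mulRightOn {U : Ideal A} [IsSimpleModule A U] {u a : A} (hu : u ∈ U)
    (hua : u * a ≠ 0) : Function.Injective (mulRightOn U a) :=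
  LinearMap.injective_of_ne_zero fun h ↦ hua (LinearMap.congr_fun h ⟨u, hu⟩)

variable [Module.Injective A A]

theorem exists_forall_eq_mul {I : Ideal A} (f : I →ₗ[A] A) : ∃ b : A, ∀ x : I, f x = x * b := by
  obtain ⟨g, hg⟩ := Module.Injective.out (Q := A) I.subtype I.injective_subtype f
  refine ⟨g 1, fun x ↦ ?_⟩
  rw [← hg x, ← smul_eq_mul, ← map_smul, smul_eq_mul, mul_one, I.subtype_apply]

theorem mk_linearMap_ideal_le (I : Ideal A) : #(I →ₗ[A] A) ≤ #A := by
  choose b hb using fun f : I →ₗ[A] A ↦ exists_forall_eq_mul f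
  exact mk_le_of_injective (f := b) fun f g h ↦ LinearMap.ext fun x ↦ by rw [hb f, hb g, h]

theorem exists_mul_eq_one_of_isRightRegular {a : A} (ha : IsRightRegular a) :
    ∃ c, a * c = 1 := by
  obtain ⟨g, hg⟩ := Module.Injective.out (Q := A) (LinearMap.toSpanSingleton A A a) ha
    LinearMap.id
  refine ⟨g 1, ?_⟩
  rw [← smul_eq_mul, ← map_smul, smul_eq_mul, mul_one]
  simpa using hg 1

theorem mul_eq_bot_of_linearEquiv {U V I : Ideal A} (e : U ≃ₗ[A] V) (h : U * I = ⊥) :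
    V * I = ⊥ := by
  rw [mul_eq_bot_iff_forall] at h ⊢
  obtain ⟨b, hb⟩ := exists_forall_eq_mul (V.subtype ∘ₗ e.toLinearMap)
  intro v hv i hi
  obtain ⟨u, hu⟩ := e.surjective ⟨v, hv⟩
  have hv : v = u * b := by simpa [hu] using hb u
  rw [hv, mul_assoc, h u u.2 _ (I.mul_mem_left b hi)]

theorem mul_eq_bot_or_of_mul_mul_eq_bot (U I K : Ideal A) [IsSimpleModule A U]
    (h : U * (I * K) = ⊥) : U * I = ⊥ ∨ U * K = ⊥ := by
  refine or_iff_not_imp_left.2 fun hI ↦ ?_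
  obtain ⟨u, hu, a, ha, hua⟩ : ∃ u ∈ U, ∃ a ∈ I, u * a ≠ 0 := by
    simpa [mul_eq_bot_iff_forall] using hI
  let e := LinearEquiv.ofInjective _ (injective_mulRightOn hu hua)
  refine mul_eq_bot_of_linearEquiv e.symm (mul_eq_bot_iff_forall.2 ?_)
  rintro _ ⟨v, rfl⟩ k hk
  change v * a * k = 0
  rw [mul_assoc]
  exact mul_eq_bot_iff_forall.1 h v v.2 _ (Ideal.mul_mem_mul ha hk)

theorem mul_jacobson_eq_bot (U : Ideal A) [IsSimpleModule A U] : U * Ring.jacobson A = ⊥ := by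
  rw [mul_eq_bot_iff_forall]
  intro u hu a ha
  by_contra hua
  let e := LinearEquiv.ofInjective _ (injective_mulRightOn hu hua)
  obtain ⟨b, hb⟩ := exists_forall_eq_mul (U.subtype ∘ₗ e.symm.toLinearMap)
  have huab : u = u * a * b := by
    have h := hb (e ⟨u, hu⟩)
    rw [LinearMap.comp_apply, LinearEquiv.coe_coe, e.symm_apply_apply] at h
    exact h
  have hunit := isUnit_one_add_of_mem_jacobson (neg_mem (Ideal.mul_mem_right b _ ha))
  have hu0 : u = 0 := hunit.mul_left_eq_zero.1 <| by
    rw [mul_add, mul_neg, ← mul_assoc, ← huab, mul_one, add_neg_cancel]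
  exact hua (by rw [hu0, zero_mul])

variable [IsAtomic (Ideal A)]

theorem isUnit_one_add_of_forall_simple_mul_eq_zero {a : A}
    (ha : ∀ U : Ideal A, IsSimpleModule A U → ∀ u ∈ U, u * a = 0) : IsUnit (1 + a) := by
  have exists_right_inv {b : A} (hb : ∀ U : Ideal A, IsSimpleModule A U → ∀ u ∈ U, u * b = 0) :
      ∃ c, (1 + b) * c = 1 := by
    refine exists_mul_eq_one_of_isRightRegular ?_
    suffices LinearMap.ker (LinearMap.toSpanSingleton A A (1 + b)) = ⊥ from
      LinearMap.ker_eq_bot.1 this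
    by_contra hker
    obtain ⟨U, hU, hUker⟩ := (eq_bot_or_exists_atom_le _).resolve_left hker
    refine hU.1 (U.eq_bot_iff.2 fun u hu ↦ ?_)
    have huker : u * (1 + b) = 0 := hUker hu
    rwa [mul_add, hb U (isSimpleModule_iff_isAtom.2 hU) u hu, mul_one, add_zero] at huker
  obtain ⟨c, hc⟩ := exists_right_inv ha
  have hc' : c = 1 + a * -c := by rw [← hc]; noncomm_ring
  obtain ⟨d, hd⟩ := exists_right_inv (b := a * -c) fun U hU u hu ↦ by
    rw [← mul_assoc, ha U hU u hu, zero_mul]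
  rw [← hc'] at hd
  exact ⟨⟨1 + a, c, hc, left_inv_eq_right_inv hc hd ▸ hd⟩, rfl⟩

theorem le_jacobson_of_forall_simple_mul_eq_bot {I : Ideal A}
    (hI : ∀ U : Ideal A, IsSimpleModule A U → U * I = ⊥) : I ≤ Ring.jacobson A := by
  intro a ha
  rw [← Ideal.jacobson_bot, Ideal.mem_jacobson_iff]
  intro y
  obtain ⟨c, hc⟩ := (isUnit_one_add_of_forall_simple_mul_eq_zero (a := y * a) fun U hU u hu ↦
    mul_eq_bot_iff_forall.1 (hI U hU) u hu _ (I.mul_mem_left y ha)).exists_left_inv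
  refine ⟨c, ?_⟩
  rw [Ideal.mem_bot, ← hc]
  noncomm_ring

end SelfInjective

section IsotypicComponent

variable {R M T : Type*} [Ring R] [AddCommGroup M] [Module R M] [AddCommGroup T] [Module R T]
  [IsSimpleModule R T] {f : T →ₗ[R] M}

theorem isotypicComponent_mem_isotypicComponents (hf : Function.Injective f) :
    isotypicComponent R M T ∈ isotypicComponents R M :=
  let e := LinearEquiv.ofInjective f hf
  ⟨LinearMap.range f, .congr e.symm, e.isotypicComponent_eq⟩

theorem nonempty_linearEquiv_of_isotypicComponent_eq (hf : Function.Injective f) {T' : Type*}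
    [AddCommGroup T'] [Module R T'] [IsSimpleModule R T']
    (h : isotypicComponent R M T = isotypicComponent R M T') : Nonempty (T ≃ₗ[R] T') := by
  let e := LinearEquiv.ofInjective f hf
  have hrange : LinearMap.range f ≤ isotypicComponent R M T' := by
    rw [← h, e.isotypicComponent_eq]
    exact (LinearMap.range f).le_isotypicComponent
  have : IsSimpleModule R (LinearMap.range f) := .congr e.symm
  obtain ⟨e'⟩ := isIsotypicOfType_submodule_iff.1 (.isotypicComponent R M T') _ hrange
  exact ⟨e.trans e'⟩

end IsotypicComponent

section SemisimpleQuotient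

variable {A : Type*} [Ring A] [IsSemisimpleRing (A ⧸ Ring.jacobson A)]

theorem isSemisimpleModule_of_isTorsionBySet_jacobson {M : Type*} [AddCommGroup M] [Module A M]
    (hM : Module.IsTorsionBySet A M (Ring.jacobson A)) : IsSemisimpleModule A M :=
  let _ := hM.module
  hM.isSemisimpleModule_iff.1 inferInstance

theorem isSemisimpleModule_quotient_jacobson_smul_top (M : Type*) [AddCommGroup M] [Module A M] :
    IsSemisimpleModule A (M ⧸ Ring.jacobson A • (⊤ : Submodule A M)) :=
  isSemisimpleModule_of_isTorsionBySet_jacobson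
    (Module.isTorsionBySet_quotient_ideal_smul M (Ring.jacobson A))

instance isSemisimpleModule_quotient_jacobson : IsSemisimpleModule A (A ⧸ Ring.jacobson A) :=
  isSemisimpleModule_of_isTorsionBySet_jacobson <|
    (Module.isTorsionBySet_quotient_iff _ _).2 fun _ _ ha ↦ Ideal.mul_mem_right _ _ ha

theorem exists_injective_linearMap_quotient_jacobson (T : Type*) [AddCommGroup T] [Module A T]
    [IsSimpleModule A T] : ∃ f : T →ₗ[A] A ⧸ Ring.jacobson A, Function.Injective f := by
  have := IsSimpleModule.nontrivial A T
  obtain ⟨t, ht⟩ := exists_ne (0 : T)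
  have hJt : Ring.jacobson A ≤ LinearMap.ker (LinearMap.toSpanSingleton A T t) := fun x hx ↦
    Module.mem_annihilator.1 (IsSemisimpleModule.jacobson_le_annihilator A T hx) t
  have hne : (Ring.jacobson A).liftQ _ hJt ≠ 0 := fun h ↦ ht <| by
    have h1 := LinearMap.congr_fun h (Submodule.Quotient.mk 1)
    rwa [Submodule.liftQ_apply, LinearMap.toSpanSingleton_apply, one_smul] at h1
  obtain ⟨S, ⟨e⟩⟩ := LinearMap.linearEquiv_of_ne_zero hne
  exact ⟨S.subtype ∘ₗ e.toLinearMap, S.injective_subtype.comp e.injective⟩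

end SemisimpleQuotient

section Block

variable {A : Type*} [Ring A]

/-- The preimage in `A` of an isotypic component `c` of `A ⧸ Ring.jacobson A`. When that quotient is
semisimple, `c` is one of its simple blocks, and `blockIdeal c` lets minimal left ideals of `A` be
told apart by their products with it. -/
def blockIdeal (c : isotypicComponents A (A ⧸ Ring.jacobson A)) : Ideal A :=
  c.1.comap (Ring.jacobson A).mkQ

theorem blockIdeal_not_le_jacobson (c : isotypicComponents A (A ⧸ Ring.jacobson A)) :
    ¬ blockIdeal c ≤ Ring.jacobson A := by
  intro h
  refine (bot_lt_isotypicComponents c.2).ne' (c.1.eq_bot_iff.2 fun q hq ↦ ?_)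
  obtain ⟨a, rfl⟩ := (Ring.jacobson A).mkQ_surjective q
  exact (Submodule.Quotient.mk_eq_zero _).2 (h hq)

theorem mul_mem_blockIdeal {c : isotypicComponents A (A ⧸ Ring.jacobson A)} {a : A}
    (ha : a ∈ blockIdeal c) (b : A) : a * b ∈ blockIdeal c :=
  Submodule.IsFullyInvariant.of_mem_isotypicComponents c.2
    ((Ring.jacobson A).mapQ (Ring.jacobson A) (LinearMap.toSpanSingleton A A b)
      fun _ hx ↦ Ideal.mul_mem_right b _ hx) ha

theorem blockIdeal_mul_le_jacobson {c d : isotypicComponents A (A ⧸ Ring.jacobson A)}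
    (hcd : c ≠ d) : blockIdeal c * blockIdeal d ≤ Ring.jacobson A := by
  refine Ideal.mul_le.2 fun a ha b hb ↦ (Submodule.Quotient.mk_eq_zero _).1 ?_
  have hdisj : Disjoint c.1 d.1 :=
    (sSupIndep_isotypicComponents A _).pairwiseDisjoint c.2 d.2 (Subtype.coe_ne_coe.2 hcd)
  exact Submodule.disjoint_def.1 hdisj _ (mul_mem_blockIdeal ha b) (Ideal.mul_mem_left _ a hb)

variable [Module.Injective A A]

theorem eq_of_mul_blockIdeal_ne_bot (U : Ideal A) [IsSimpleModule A U]
    {c d : isotypicComponents A (A ⧸ Ring.jacobson A)} (hc : U * blockIdeal c ≠ ⊥)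
    (hd : U * blockIdeal d ≠ ⊥) : c = d := by
  by_contra hcd
  have hU : U * (blockIdeal c * blockIdeal d) = ⊥ :=
    le_bot_iff.1 ((Ideal.mul_mono_right (blockIdeal_mul_le_jacobson hcd)).trans
      (mul_jacobson_eq_bot U).le)
  exact (mul_eq_bot_or_of_mul_mul_eq_bot U _ _ hU).elim hc hd

variable [IsAtomic (Ideal A)]

theorem exists_isSimpleModule_mul_blockIdeal_ne_bot
    (c : isotypicComponents A (A ⧸ Ring.jacobson A)) :
    ∃ U : Ideal A, IsSimpleModule A U ∧ U * blockIdeal c ≠ ⊥ := by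
  by_contra! h
  exact blockIdeal_not_le_jacobson c (le_jacobson_of_forall_simple_mul_eq_bot h)

theorem exists_injective_linearMap_self [IsSemisimpleRing (A ⧸ Ring.jacobson A)] (T : Type*)
    [AddCommGroup T] [Module A T] [IsSimpleModule A T] :
    ∃ f : T →ₗ[A] A, Function.Injective f := by
  choose U _ hUc using exists_isSimpleModule_mul_blockIdeal_ne_bot (A := A)
  choose g hg using fun c ↦ exists_injective_linearMap_quotient_jacobson (A := A) (U c)
  let φ : isotypicComponents A (A ⧸ Ring.jacobson A) →
      isotypicComponents A (A ⧸ Ring.jacobson A) := fun c ↦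
    ⟨isotypicComponent A _ (U c), isotypicComponent_mem_isotypicComponents (hg c)⟩
  have hφ : Function.Injective φ := by
    intro c d hcd
    obtain ⟨e⟩ := nonempty_linearEquiv_of_isotypicComponent_eq (hg c) (congrArg Subtype.val hcd)
    exact eq_of_mul_blockIdeal_ne_bot (U d) (fun h ↦ hUc c (mul_eq_bot_of_linearEquiv e.symm h))
      (hUc d)
  obtain ⟨f, hf⟩ := exists_injective_linearMap_quotient_jacobson (A := A) T
  obtain ⟨c, hc⟩ := Finite.surjective_of_injective hφ
    ⟨_, isotypicComponent_mem_isotypicComponents hf⟩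
  obtain ⟨e⟩ := nonempty_linearEquiv_of_isotypicComponent_eq hf (congrArg Subtype.val hc).symm
  exact ⟨(U c).subtype ∘ₗ e.toLinearMap, (U c).injective_subtype.comp e.injective⟩

end Block

universe u

section SpanRank

variable {R : Type u} [Ring R]

theorem spanRank_top_dfinsupp_le {ι : Type u} (S : ι → Type u) [∀ i, AddCommGroup (S i)]
    [∀ i, Module R (S i)] [∀ i, IsSimpleModule R (S i)] :
    (⊤ : Submodule R (Π₀ i, S i)).spanRank ≤ #ι := by
  classical
  have (i : ι) : Nontrivial (S i) := IsSimpleModule.nontrivial R (S i)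
  choose t ht using fun i ↦ exists_ne (0 : S i)
  suffices Submodule.span R (Set.range fun i ↦ DFinsupp.single i (t i)) = ⊤ from
    this ▸ (Submodule.spanRank_span_le_card _).trans mk_range_le
  rw [← top_le_iff, ← DFinsupp.iSup_range_lsingle, iSup_le_iff]
  rintro i _ ⟨x, rfl⟩
  obtain ⟨r, rfl⟩ := IsSimpleModule.toSpanSingleton_surjective R (ht i) x
  rw [LinearMap.toSpanSingleton_apply, map_smul]
  exact Submodule.smul_mem _ r (Submodule.subset_span ⟨i, rfl⟩)

theorem two_power_le_mk_dfinsupp_linearMap {ι : Type u} (S : ι → Type u) (N : Type u)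
    [∀ i, AddCommGroup (S i)] [∀ i, Module R (S i)] [AddCommGroup N] [Module R N]
    [∀ i, Nontrivial (S i →ₗ[R] N)] : 2 ^ #ι ≤ #((Π₀ i, S i) →ₗ[R] N) := by
  classical
  calc (2 : Cardinal.{u}) ^ #ι = prod fun _ : ι ↦ (2 : Cardinal.{u}) := (prod_const' _ _).symm
    _ ≤ prod fun i ↦ #(S i →ₗ[R] N) := prod_le_prod _ _ fun i ↦
      two_le_iff_one_lt.2 (one_lt_iff_nontrivial.2 inferInstance)
    _ = #(∀ i, S i →ₗ[R] N) := (mk_pi _).symm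
    _ = #((Π₀ i, S i) →ₗ[R] N) := (DFinsupp.lsum ℕ).toEquiv.cardinal_eq

variable {M : Type u} [AddCommGroup M] [Module R M]

theorem two_power_spanRank_le_mk_linearMap [IsSemisimpleModule R M] (N : Type u) [AddCommGroup N]
    [Module R N] (hN : ∀ S : Submodule R M, IsSimpleModule R S → Nontrivial (S →ₗ[R] N)) :
    2 ^ (⊤ : Submodule R M).spanRank ≤ #(M →ₗ[R] N) := by
  obtain ⟨s, e, -, hs⟩ := IsSemisimpleModule.exists_linearEquiv_dfinsupp R M
  have (S : s) : Nontrivial (S.1 →ₗ[R] N) := hN S.1 (hs S)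
  calc (2 : Cardinal.{u}) ^ (⊤ : Submodule R M).spanRank ≤ 2 ^ #s := by
        rw [Submodule.spanRank_eq_of_equiv e]
        exact power_le_power_left two_ne_zero (spanRank_top_dfinsupp_le _)
    _ ≤ #((Π₀ S : s, S.1) →ₗ[R] N) := two_power_le_mk_dfinsupp_linearMap _ N
    _ = #(M →ₗ[R] N) := (e.arrowCongrAddEquiv (.refl R N)).symm.toEquiv.cardinal_eq

theorem eq_top_of_sup_smul_top_eq_top {I : Ideal R} (hI : IsNilpotent I) {N : Submodule R M}
    (h : N ⊔ I • (⊤ : Submodule R M) = ⊤) : N = ⊤ := by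
  have sup_pow_smul_top (n : ℕ) : N ⊔ I ^ n • (⊤ : Submodule R M) = ⊤ := by
    induction n with
    | zero => rw [Submodule.pow_zero, Ideal.one_eq_top, Submodule.top_smul, sup_top_eq]
    | succ n ih =>
      refine top_le_iff.1 ?_
      calc (⊤ : Submodule R M) = N ⊔ I ^ n • (N ⊔ I • (⊤ : Submodule R M)) := by rw [h, ih]
        _ = N ⊔ (I ^ n • N ⊔ I ^ (n + 1) • ⊤) := by
          rw [Submodule.smul_sup, Submodule.pow_succ, Submodule.mul_smul]
        _ ≤ N ⊔ I ^ (n + 1) • ⊤ :=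
          sup_le le_sup_left (sup_le (Submodule.smul_le_right.trans le_sup_left) le_sup_right)
  obtain ⟨n, hn⟩ := hI
  have h0 := sup_pow_smul_top n
  rwa [hn, Submodule.zero_eq_bot, Submodule.bot_smul, sup_bot_eq] at h0

theorem spanRank_top_le_spanRank_top_quotient {I : Ideal R} (hI : IsNilpotent I) :
    (⊤ : Submodule R M).spanRank ≤ (⊤ : Submodule R (M ⧸ I • (⊤ : Submodule R M))).spanRank := by
  set K : Submodule R M := I • ⊤
  obtain ⟨s, hs, hspan⟩ := (⊤ : Submodule R (M ⧸ K)).exists_span_set_card_eq_spanRank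
  obtain ⟨t, ht⟩ := K.mkQ_surjective.hasRightInverse
  suffices Submodule.span R (t '' s) = ⊤ by
    rw [← this, ← hs]
    exact (Submodule.spanRank_span_le_card _).trans mk_image_le
  refine eq_top_of_sup_smul_top_eq_top hI ?_
  have hmap : (Submodule.span R (t '' s)).map K.mkQ = ⊤ := by
    rw [Submodule.map_span, ← Set.image_comp, ht.comp_eq_id, Set.image_id, hspan]
  rw [sup_comm, ← Submodule.comap_map_mkQ, hmap, Submodule.comap_top]

theorem spanRank_smul_le (I : Ideal R) [I.IsTwoSided] (N : Submodule R M) :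
    (I • N).spanRank ≤ I.spanRank * N.spanRank := by
  obtain ⟨s, hs, rfl⟩ := I.exists_span_set_card_eq_spanRank
  obtain ⟨t, ht, rfl⟩ := N.exists_span_set_card_eq_spanRank
  suffices Submodule.span R s • Submodule.span R t =
      Submodule.span R (Set.image2 (· • ·) s t) by
    rw [this, ← hs, ← ht]
    exact (Submodule.spanRank_span_le_card _).trans mk_image2_le
  refine le_antisymm (Submodule.smul_le.2 fun a ha n hn ↦ ?_) (Submodule.span_le.2 ?_)
  · induction hn using Submodule.span_induction generalizing a with
    | zero => rw [smul_zero]; exact zero_mem _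
    | add x y _ _ hx hy => rw [smul_add]; exact add_mem (hx a ha) (hy a ha)
    | smul r x _ hx => rw [← mul_smul]; exact hx _ (Ideal.mul_mem_right r _ ha)
    | mem x hx =>
      induction ha using Submodule.span_induction with
      | zero => rw [zero_smul]; exact zero_mem _
      | add a b _ _ ha hb => rw [add_smul]; exact add_mem ha hb
      | smul r a _ ha => rw [smul_assoc]; exact Submodule.smul_mem _ r ha
      | mem a ha => exact Submodule.subset_span ⟨a, ha, x, hx, rfl⟩
  · rintro _ ⟨a, ha, x, hx, rfl⟩
    exact Submodule.smul_mem_smul (Submodule.subset_span ha) (Submodule.subset_span hx)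

theorem mk_le_of_spanRank_top_le {κ : Cardinal.{u}} (hκ : ℵ₀ ≤ κ) (hR : #R ≤ κ)
    (hM : (⊤ : Submodule R M).spanRank ≤ κ) : #M ≤ κ := by
  classical
  obtain ⟨s, hs, hspan⟩ := (⊤ : Submodule R M).exists_span_set_card_eq_spanRank
  have surjective_linearCombination :
      Function.Surjective (Finsupp.linearCombination R ((↑) : s → M)) := by
    rw [← LinearMap.range_eq_top, Finsupp.range_linearCombination, Subtype.range_coe, hspan]
  calc #M ≤ #(s →₀ R) := mk_le_of_surjective surjective_linearCombination
    _ ≤ #(Finset (s × R)) := mk_le_of_injective (Finsupp.graph_injective s R)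
    _ ≤ #(List (s × R)) := mk_le_of_surjective List.toFinset_surjective
    _ ≤ max ℵ₀ #(s × R) := mk_list_le_max _
    _ ≤ κ := by
      rw [← mul_def, hs]
      exact max_le hκ (mul_le_of_le hκ hM hR)

theorem mk_eq_mk_quotient_mul_mk (N : Submodule R M) : #M = #(M ⧸ N) * #N :=
  (AddSubgroup.addGroupEquivQuotientProdAddSubgroup (s := N.toAddSubgroup)).cardinal_eq

end SpanRank

section Semiprimary

variable {A : Type u} [Ring A] [IsSemiprimaryRing A]

theorem two_power_spanRank_le_mk_linearMap_of_isSemiprimaryRing (M N : Type u)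
    [AddCommGroup M] [Module A M] [AddCommGroup N] [Module A N]
    (hN : ∀ (T : Type u) [AddCommGroup T] [Module A T], IsSimpleModule A T →
      Nontrivial (T →ₗ[A] N)) :
    2 ^ (⊤ : Submodule A M).spanRank ≤ #(M →ₗ[A] N) := by
  set K : Submodule A M := Ring.jacobson A • ⊤
  have : IsSemisimpleModule A (M ⧸ K) := isSemisimpleModule_quotient_jacobson_smul_top M
  calc (2 : Cardinal.{u}) ^ (⊤ : Submodule A M).spanRank
      ≤ 2 ^ (⊤ : Submodule A (M ⧸ K)).spanRank := power_le_power_left two_ne_zero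
        (spanRank_top_le_spanRank_top_quotient IsSemiprimaryRing.isNilpotent)
    _ ≤ #(M ⧸ K →ₗ[A] N) := two_power_spanRank_le_mk_linearMap N fun S hS ↦ hN S hS
    _ ≤ #(M →ₗ[A] N) := mk_le_of_injective (f := fun f ↦ f ∘ₗ K.mkQ)
        fun _ _ h ↦ K.linearMap_qext h

theorem mk_le_of_jacobson_spanRank_le {κ : Cardinal.{u}} (hκ : ℵ₀ ≤ κ)
    (hA : #(A ⧸ Ring.jacobson A) ≤ κ) (hJ : (Ring.jacobson A).spanRank ≤ κ) (M : Type u)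
    [AddCommGroup M] [Module A M] (hM : (⊤ : Submodule A M).spanRank ≤ κ) : #M ≤ κ := by
  revert hM
  refine IsSemiprimaryRing.induction A A M
    (P := fun M ↦ (⊤ : Submodule A M).spanRank ≤ κ → #M ≤ κ) ?_ ?_
  · intro M _ _ _ _ _ htors hM
    let _ := htors.module
    refine mk_le_of_spanRank_top_le (R := A ⧸ Ring.jacobson A) hκ hA (le_trans ?_ hM)
    have hrange : LinearMap.range htors.semilinearMap = ⊤ :=
      LinearMap.range_eq_top.2 Function.surjective_id
    exact hrange ▸ Submodule.spanRank_range_le htors.semilinearMap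
  · intro M _ _ _ _ N hN hQ hM
    rw [mk_eq_mk_quotient_mul_mk N]
    refine mul_le_of_le hκ (hQ ?_) (hN ?_)
    · rw [← N.range_mkQ]
      exact (Submodule.spanRank_range_le _).trans hM
    · rw [Submodule.spanRank_top]
      exact (spanRank_smul_le _ _).trans (mul_le_of_le hκ hJ hM)

variable [Module.Injective A A]

theorem two_power_spanRank_ideal_le (I : Ideal A) : 2 ^ I.spanRank ≤ #A := by
  have := isAtomic_submodule A A
  rw [← Submodule.spanRank_top]
  refine (two_power_spanRank_le_mk_linearMap_of_isSemiprimaryRing I A fun T _ _ _ ↦ ?_).trans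
    (mk_linearMap_ideal_le I)
  obtain ⟨f, hf⟩ := exists_injective_linearMap_self (A := A) T
  have := IsSimpleModule.nontrivial A T
  obtain ⟨t, ht⟩ := exists_ne (0 : T)
  exact ⟨f, 0, fun h ↦ ht (hf (by rw [h]; rfl))⟩

theorem two_power_spanRank_jacobson_le_of_not_fg (hJ : ¬ (Ring.jacobson A).FG) :
    2 ^ (Ring.jacobson A).spanRank ≤ #(A ⧸ Ring.jacobson A) := by
  set κ := (Ring.jacobson A).spanRank
  have hκ : ℵ₀ ≤ κ := not_lt.1 (mt Submodule.spanRank_finite_iff_fg.1 hJ)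
  have hA : 2 ^ κ ≤ #A := two_power_spanRank_ideal_le _
  have htop : (⊤ : Submodule A A).spanRank ≤ ℵ₀ :=
    (Submodule.spanRank_finite_iff_fg.2 Module.Finite.fg_top).le
  have hAmax : #A ≤ max #(A ⧸ Ring.jacobson A) κ :=
    mk_le_of_jacobson_spanRank_le (le_max_of_le_right hκ) (le_max_left _ _) (le_max_right _ _) A
      (htop.trans (le_max_of_le_right hκ))
  exact (le_max_iff.1 (hA.trans hAmax)).resolve_right (cantor κ).not_ge

theorem isArtinianRing_of_mk_quotient_jacobson_lt_continuum (h : #(A ⧸ Ring.jacobson A) < 𝔠) :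
    IsArtinianRing A := by
  refine IsSemiprimaryRing.isNoetherian_iff_isArtinian.1
    (IsSemiprimaryRing.isNoetherianRing_iff_jacobson_fg.2 ?_)
  by_contra hJ
  refine h.not_ge ?_
  calc 𝔠 = 2 ^ ℵ₀ := two_power_aleph0.symm
    _ ≤ 2 ^ (Ring.jacobson A).spanRank := power_le_power_left two_ne_zero
      (not_lt.1 (mt Submodule.spanRank_finite_iff_fg.1 hJ))
    _ ≤ #(A ⧸ Ring.jacobson A) := two_power_spanRank_jacobson_le_of_not_fg hJ

end Semiprimary

section IsSemiprimary

open scoped Pointwise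

variable {A : Type*} [Ring A]

theorem pow_le_span_pow (I : Ideal A) (n : ℕ) : I ^ n ≤ Ideal.span ((I : Set A) ^ n) := by
  induction n with
  | zero =>
    rw [pow_zero, Ideal.span_one]
    exact le_top
  | succ n ih =>
    rw [Submodule.pow_succ, Ideal.mul_le]
    intro x hx a ha
    replace hx := ih hx
    induction hx using Submodule.span_induction with
    | mem x hx =>
      rw [pow_succ]
      exact Submodule.subset_span (Set.mul_mem_mul hx ha)
    | zero => rw [zero_mul]; exact zero_mem _
    | add x y _ _ hx hy => rw [add_mul]; exact add_mem hx hy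
    | smul r x _ hx => rw [smul_mul_assoc]; exact Submodule.smul_mem _ r hx

theorem isNilpotent_of_forall_prod_eq_zero {I : Ideal A} {n : ℕ}
    (h : ∀ f : Fin n → A, (∀ i, f i ∈ I) → (List.ofFn f).prod = 0) : IsNilpotent I := by
  refine ⟨n, le_bot_iff.1 ((pow_le_span_pow I n).trans (Submodule.span_le.2 fun a ha ↦ ?_))⟩
  obtain ⟨f, rfl⟩ := Set.mem_pow.1 ha
  exact h _ fun i ↦ (f i).2

theorem mem_jacobson_bot_iff_mem_ring_jacobson {a : A} :
    a ∈ (⊥ : TwoSidedIdeal A).jacobson ↔ a ∈ Ring.jacobson A := by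
  rw [← Ideal.jacobson_bot, TwoSidedIdeal.mem_jacobson_iff, Ideal.mem_jacobson_iff]
  rfl

theorem IsSemiprimary.isSemiprimaryRing (h : IsSemiprimary A) : IsSemiprimaryRing A := by
  obtain ⟨_, n, -, hn⟩ := h
  rw [Ideal.jacobson_bot] at hn
  let g : (⊥ : TwoSidedIdeal A).jacobson.ringCon.Quotient →+* A ⧸ Ring.jacobson A :=
    RingCon.lift _ (Ideal.Quotient.mk (Ring.jacobson A)) fun a b hab ↦ Ideal.Quotient.eq.2 <|
      mem_jacobson_bot_iff_mem_ring_jacobson.1 ((TwoSidedIdeal.rel_iff _ a b).1 hab)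
  refine ⟨g.isSemisimpleRing_of_surjective fun q ↦ ?_, isNilpotent_of_forall_prod_eq_zero hn⟩
  obtain ⟨a, rfl⟩ := Ideal.Quotient.mk_surjective q
  exact ⟨(a : RingCon.Quotient _), rfl⟩

end IsSemiprimary

theorem faith_qf_of_countable_card_semisimple_quotient_general (A : Type*) [Ring A]
    (hsp : IsSemiprimary A) (hinj : Module.Injective A A)
    (hcard : #(A ⧸ Ideal.jacobson (⊥ : Ideal A)) < 𝔠) : IsQuasiFrobenius A := by
  have := hsp.isSemiprimaryRing
  rw [Ideal.jacobson_bot] at hcard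
  exact ⟨hinj, isArtinianRing_of_mk_quotient_jacobson_lt_continuum hcard⟩

/-- A left self-injective semiprimary ring `A` with `|A / Jac(A)| ≤ ℵ₀` is quasi-Frobenius. -/
theorem faith_qf_of_countable_card_semisimple_quotient
    (A : Type*) [Ring A]
    (hsp : IsSemiprimary A) (hinj : Module.Injective A A)
    (hcard : #(A ⧸ Ideal.jacobson (⊥ : Ideal A)) ≤ ℵ₀) :
    IsQuasiFrobenius A :=
  faith_qf_of_countable_card_semisimple_quotient_general A hsp hinj
    (hcard.trans_lt aleph0_lt_continuum)
end

section
/- Let A be a left self-injective semiprimary ring and e an idempotent of A such that Ae is an indecomposable left A-module. Then the right A-module eA has a simple socle, which is moreover essential in eA. -/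
/-!
Write `J` for the Jacobson radical of `A`. For each simple left ideal `S` of `A / J` choose an
idempotent `e` of `A` whose class generates `S`, and a simple left ideal `T ≤ Ae`. If two such
choices satisfy `T ≅ T'`, then by self-injectivity the isomorphism and its inverse are right
multiplications by elements of `A`; modulo `J` the former induces a map `S → S'`, which is nonzero
because `1 - x` is a unit for `x ∈ J`, so `S ≅ S'`. As `A / J` has only finitely many isomorphism
classes of simple modules, every one of them occurs as some `T`: each simple left module embeds
in `A`.

Embedding `Ae / Je` in this way gives `0 ≠ s ∈ eA` with `J s = 0`. If `0 ≠ x ∈ eA` and `a x = 0`,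
then `a e ∈ J`, since otherwise `a e` would generate `Ae` and `x = e x` would vanish; hence
`a s = 0`. By self-injectivity `s ∈ xA`, so `sA` is the least nonzero submodule of `eA`.
-/

universe u

open Cardinal

/-- The socle of a module: the sum of all its simple submodules. -/
def socle (R M : Type*) [Ring R] [AddCommGroup M] [Module R M] : Submodule R M :=
  sSup {N : Submodule R M | IsSimpleModule R N}

/-- A module is *indecomposable* if it is nonzero and is not the direct sum of two
nonzero submodules. -/
def IsIndecomposableModule (R M : Type*) [Ring R] [AddCommGroup M] [Module R M] : Prop :=
  Nontrivial M ∧ ∀ N N' : Submodule R M, IsCompl N N' → N = ⊥ ∨ N' = ⊥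

/-- A submodule is *essential* if it intersects every nonzero submodule nontrivially. -/
def IsEssentialSubmodule {R M : Type*} [Ring R] [AddCommGroup M] [Module R M]
    (N : Submodule R M) : Prop :=
  ∀ P : Submodule R M, N ⊓ P = ⊥ → P = ⊥

section Module

variable {R M : Type*} [Ring R] [AddCommGroup M] [Module R M]

lemma isSimpleModule_socle_and_isEssentialSubmodule_of_forall_le {T : Submodule R M}
    (hT : T ≠ ⊥) (hle : ∀ P : Submodule R M, P ≠ ⊥ → T ≤ P) :
    IsSimpleModule R (socle R M) ∧ IsEssentialSubmodule (socle R M) := by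
  have hatom : IsAtom T := ⟨hT, fun P hP ↦ by_contra fun hP0 ↦ hP.not_ge (hle P hP0)⟩
  have hsocle : socle R M = T := by
    refine le_antisymm (sSup_le fun P (hP : IsSimpleModule R P) ↦ ?_)
      (le_sSup (isSimpleModule_iff_isAtom.2 hatom))
    have hP' : IsAtom P := isSimpleModule_iff_isAtom.1 hP
    exact (hP'.le_iff_eq hT).1 (hle P hP'.1) |>.ge
  rw [hsocle]
  refine ⟨isSimpleModule_iff_isAtom.2 hatom, fun P hTP ↦ by_contra fun hP ↦ hT ?_⟩
  rwa [inf_eq_left.2 (hle P hP)] at hTP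

lemma IsEssentialSubmodule.exists_le_isSimpleModule (h : IsEssentialSubmodule (socle R M))
    {P : Submodule R M} (hP : P ≠ ⊥) : ∃ T ≤ P, IsSimpleModule R T := by
  have : IsSemisimpleModule R (socle R M) := by
    rw [socle, sSup_eq_iSup]
    exact isSemisimpleModule_biSup_of_isSemisimpleModule_submodule
      fun T (_ : IsSimpleModule R T) ↦ inferInstance
  have : IsSemisimpleModule R ↥(socle R M ⊓ P) :=
    .of_injective _ (Submodule.inclusion_injective (inf_le_left : socle R M ⊓ P ≤ socle R M))
  obtain hbot | ⟨T, hT, hTsimple⟩ :=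
    IsSemisimpleModule.eq_bot_or_exists_simple_le (socle R M ⊓ P)
  · exact absurd (h P hbot) hP
  · exact ⟨T, hT.trans inf_le_right, hTsimple⟩

lemma isEssentialSubmodule_socle_of_forall_exists
    (h : ∀ P : Submodule R M, P ≠ ⊥ → ∃ T ≤ P, IsSimpleModule R T) :
    IsEssentialSubmodule (socle R M) := by
  refine fun P hP ↦ by_contra fun hP0 ↦ ?_
  obtain ⟨T, hTP, hT⟩ := h P hP0
  exact (isSimpleModule_iff_isAtom.1 hT).1 <| le_bot_iff.1 <|
    hP ▸ le_inf (le_sSup (show IsSimpleModule R T from hT)) hTP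

lemma IsIndecomposableModule.eq_zero_or_eq_one (h : IsIndecomposableModule R M)
    {p : Module.End R M} (hp : IsIdempotentElem p) : p = 0 ∨ p = 1 := by
  refine (h.2 _ _ (LinearMap.IsIdempotentElem.isProj_range p hp).isCompl).imp
    LinearMap.range_eq_bot.1 fun hker ↦ LinearMap.ext fun x ↦ LinearMap.ker_eq_bot.1 hker ?_
  exact LinearMap.congr_fun hp x

lemma nonempty_linearEquiv_of_isotypicComponent_eq_s6 {S S' : Submodule R M}
    [IsSimpleModule R S] [IsSimpleModule R S']
    (h : isotypicComponent R M S = isotypicComponent R M S') : Nonempty (S ≃ₗ[R] S') :=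
  isIsotypicOfType_submodule_iff.1 (.isotypicComponent R M S') S (h ▸ S.le_isotypicComponent)

lemma exists_nonempty_linearEquiv_of_injective_on_simple [IsNoetherian R M]
    (T : Submodule R M → Submodule R M)
    (hT : ∀ S : Submodule R M, IsSimpleModule R S → IsSimpleModule R (T S))
    (hinj : ∀ S S' : Submodule R M, IsSimpleModule R S → IsSimpleModule R S' →
      Nonempty (T S ≃ₗ[R] T S') → Nonempty (S ≃ₗ[R] S'))
    (S : Submodule R M) [hS : IsSimpleModule R S] :
    ∃ S' : Submodule R M, IsSimpleModule R S' ∧ Nonempty (S ≃ₗ[R] T S') := by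
  -- `T` induces an injective self-map of the finite set of isotypic components.
  have hcomp (c : isotypicComponents R M) :
      ∃ S : Submodule R M, IsSimpleModule R S ∧ isotypicComponent R M S = c :=
    let ⟨_, S, hS, h⟩ := c; ⟨S, hS, h.symm⟩
  choose σ hσ hσc using hcomp
  have hTσ (c) : IsSimpleModule R (T (σ c)) := hT _ (hσ c)
  let F (c : isotypicComponents R M) : isotypicComponents R M :=
    ⟨isotypicComponent R M (T (σ c)), T (σ c), inferInstance, rfl⟩
  have hF : Function.Injective F := fun c d hcd ↦ by
    obtain ⟨φ⟩ := hinj _ _ (hσ c) (hσ d)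
      (nonempty_linearEquiv_of_isotypicComponent_eq_s6 (congrArg Subtype.val hcd))
    rw [Subtype.ext_iff, ← hσc c, ← hσc d, φ.isotypicComponent_eq]
  obtain ⟨c, hc⟩ := Finite.injective_iff_surjective.1 hF ⟨isotypicComponent R M S, S, hS, rfl⟩
  exact ⟨σ c, hσ c, nonempty_linearEquiv_of_isotypicComponent_eq_s6 (congrArg Subtype.val hc).symm⟩

end Module

lemma exists_linearMap_apply_eq {R : Type*} {M Q : Type u} [Ring R] [AddCommGroup M] [Module R M]
    [AddCommGroup Q] [Module R Q] [Module.Injective R Q] {x : M} {t : Q}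
    (h : ∀ a : R, a • x = 0 → a • t = 0) : ∃ φ : M →ₗ[R] Q, φ x = t := by
  let g := LinearMap.toSpanSingleton R M x
  have hker : LinearMap.ker g ≤ LinearMap.ker (LinearMap.toSpanSingleton R Q t) := h
  let f : LinearMap.range g →ₗ[R] Q :=
    (Submodule.liftQ (LinearMap.ker g) (LinearMap.toSpanSingleton R Q t) hker) ∘ₗ
      (LinearMap.quotKerEquivRange g).symm
  obtain ⟨φ, hφ⟩ := Module.Injective.out _ (LinearMap.range g).injective_subtype f
  have hx : LinearMap.quotKerEquivRange g (Submodule.Quotient.mk 1) = ⟨x, 1, one_smul R x⟩ :=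
    Subtype.ext (one_smul R x)
  refine ⟨φ, (hφ ⟨x, 1, one_smul R x⟩).trans ?_⟩
  rw [← hx, LinearMap.comp_apply, LinearEquiv.coe_coe, LinearEquiv.symm_apply_apply,
    Submodule.liftQ_apply, LinearMap.toSpanSingleton_apply, one_smul]

lemma exists_mul_eq_of_forall_mul_eq_zero {A : Type u} [Ring A] [Module.Injective A A] {x t : A}
    (h : ∀ a, a * x = 0 → a * t = 0) : ∃ b, x * b = t := by
  obtain ⟨φ, hφ⟩ := exists_linearMap_apply_eq h
  exact ⟨φ 1, by rw [← smul_eq_mul, ← map_smul, smul_eq_mul, mul_one, hφ]⟩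

section Ring

variable {A : Type*} [Ring A]

lemma isUnit_one_sub_of_mem_jacobson {x : A} (hx : x ∈ Ring.jacobson A) : IsUnit (1 - x) := by
  have exists_left_inv {r : A} (hr : r - 1 ∈ Ring.jacobson A) : ∃ s, s * r = 1 := by
    rw [← Ideal.jacobson_bot] at hr
    obtain ⟨s, hs⟩ := Ideal.exists_mul_sub_mem_of_sub_one_mem_jacobson r hr
    exact ⟨s, sub_eq_zero.1 hs⟩
  obtain ⟨s, hs⟩ := exists_left_inv (r := 1 - x) (by simpa using hx)
  have hs' : s - 1 = s * x := by rw [← hs]; noncomm_ring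
  obtain ⟨t, ht⟩ := exists_left_inv (hs' ▸ Ideal.mul_mem_left _ s hx)
  have hts : t = 1 - x := left_inv_eq_right_inv ht hs
  exact ⟨⟨1 - x, s, hts ▸ ht, hs⟩, rfl⟩

lemma eq_zero_of_mul_eq_self_of_mem_jacobson {t x : A} (h : t * x = t)
    (hx : x ∈ Ring.jacobson A) : t = 0 := by
  refine (isUnit_one_sub_of_mem_jacobson hx).mul_left_eq_zero.1 ?_
  rw [mul_sub, mul_one, h, sub_self]

lemma mul_eq_of_mem_span_of_isIdempotentElem {e x : A} (he : IsIdempotentElem e)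
    (hx : x ∈ Submodule.span A {e}) : x * e = x := by
  obtain ⟨a, rfl⟩ := Submodule.mem_span_singleton.1 hx
  rw [smul_eq_mul, mul_assoc, he.eq]

lemma mul_eq_of_mem_span_op_of_isIdempotentElem {e x : A} (he : IsIdempotentElem e)
    (hx : x ∈ Submodule.span Aᵐᵒᵖ {e}) : e * x = x := by
  obtain ⟨a, rfl⟩ := Submodule.mem_span_singleton.1 hx
  rw [MulOpposite.smul_eq_mul_unop, ← mul_assoc, he.eq]

lemma IsIndecomposableModule.ne_zero_of_span_singleton {e : A}
    (he : IsIndecomposableModule A (Submodule.span A {e})) : e ≠ 0 :=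
  Submodule.span_singleton_eq_bot.not.1 ((Submodule.nontrivial_iff_ne_bot).1 he.1)

lemma IsIndecomposableModule.eq_zero_or_eq_of_isIdempotentElem {e f : A}
    (he : IsIndecomposableModule A (Submodule.span A {e})) (hf : IsIdempotentElem f)
    (hef : e * f = f) (hfe : f * e = f) : f = 0 ∨ f = e := by
  have hmap : ∀ x ∈ Submodule.span A {e},
      LinearMap.toSpanSingleton A A f x ∈ Submodule.span A {e} := fun x _ ↦
    Submodule.mem_span_singleton.2 ⟨x * f, by simp [mul_assoc, hfe]⟩
  let p : Module.End A (Submodule.span A {e}) := (LinearMap.toSpanSingleton A A f).restrict hmap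
  have hp : IsIdempotentElem p :=
    LinearMap.ext fun x ↦ Subtype.ext (by simp [p, mul_assoc, hf.eq])
  have hpe : (p ⟨e, Submodule.mem_span_singleton_self e⟩ : A) = f := by simp [p, hef]
  exact (he.eq_zero_or_eq_one hp).imp (fun h ↦ by simpa [h] using hpe.symm)
    fun h ↦ by simpa [h] using hpe.symm

lemma exists_isIdempotentElem_sub_mul_mem_jacobson {e f : A} (he : IsIdempotentElem e)
    (hf : IsIdempotentElem f) (hfe : f - f * e ∈ Ring.jacobson A) :
    ∃ g, IsIdempotentElem g ∧ e * g = g ∧ g * e = g ∧ g - e * f ∈ Ring.jacobson A := by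
  obtain ⟨u, hu⟩ := isUnit_one_sub_of_mem_jacobson hfe
  have hfu : f * u = f * e := by rw [hu, mul_sub, mul_sub, ← mul_assoc, hf.eq]; noncomm_ring
  set h := ↑u⁻¹ * f * e with hh
  have h_idem : h * h = h := by
    have hconj : h = ↑u⁻¹ * f * u := by rw [hh, mul_assoc, ← hfu, mul_assoc]
    rw [hconj]
    simp only [mul_assoc, Units.mul_inv_cancel_left]
    rw [← mul_assoc f f, hf.eq]
  have hhe : h * e = h := by rw [hh, mul_assoc, he.eq]
  have hhf : h - f ∈ Ring.jacobson A := by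
    have huh : u * h = f * e := by simp only [hh, mul_assoc, Units.mul_inv_cancel_left]
    have : u * (h - f) = (f - f * e) * f - (f - f * e) := by
      rw [mul_sub, huh, hu]
      noncomm_ring
    rw [← Units.inv_mul_cancel_left u (h - f), this]
    exact Ideal.mul_mem_left _ _ (sub_mem (Ideal.mul_mem_right f _ hfe) hfe)
  refine ⟨e * h, ?_, by rw [← mul_assoc, he.eq], by rw [mul_assoc, hhe], ?_⟩
  · rw [IsIdempotentElem, mul_assoc, ← mul_assoc h, hhe, h_idem]
  · rw [← mul_sub]
    exact Ideal.mul_mem_left _ e hhf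

end Ring

lemma isSemisimpleModule_quotient_of_isSemisimpleRing {A : Type*} [Ring A] (I : Ideal A)
    [I.IsTwoSided] [IsSemisimpleRing (A ⧸ I)] : IsSemisimpleModule A (A ⧸ I) := by
  have : RingHomSurjective (Ideal.Quotient.mk I) := ⟨Ideal.Quotient.mk_surjective⟩
  let f : A ⧸ I →ₛₗ[Ideal.Quotient.mk I] A ⧸ I :=
    { toFun := id, map_add' := fun _ _ ↦ rfl, map_smul' := fun _ _ ↦ rfl }
  exact (f.isSemisimpleModule_iff_of_bijective Function.bijective_id).2 inferInstance

lemma exists_submodule_quotient_jacobson_nonempty_linearEquiv {A : Type*} [Ring A]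
    [IsSemisimpleModule A (A ⧸ Ring.jacobson A)] (M : Type*) [AddCommGroup M] [Module A M]
    [IsSimpleModule A M] :
    ∃ S : Submodule A (A ⧸ Ring.jacobson A), Nonempty (M ≃ₗ[A] S) := by
  have := IsSimpleModule.nontrivial A M
  obtain ⟨m, hm⟩ := exists_ne (0 : M)
  have := IsSimpleModule.ker_toSpanSingleton_isMaximal A hm
  let f : A ⧸ Ring.jacobson A →ₗ[A] M := Submodule.liftQ _ (LinearMap.toSpanSingleton A M m)
    (Ring.jacobson_le_of_isMaximal _)
  refine LinearMap.linearEquiv_of_ne_zero (f := f) fun hf ↦ hm ?_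
  rw [← one_smul A m]
  exact LinearMap.congr_fun hf (Submodule.Quotient.mk 1)

/-- A ring is *semiperfect* if it is semisimple modulo its Jacobson radical and idempotents lift
modulo the radical. This is what relates the indecomposable modules `Ae` to the simple modules
`Ae / Je`. -/
structure IsSemiperfect (A : Type*) [Ring A] : Prop where
  isSemisimpleRing_quotient : IsSemisimpleRing (A ⧸ Ring.jacobson A)
  exists_isIdempotentElem_mk_eq : ∀ f : A ⧸ Ring.jacobson A, IsIdempotentElem f →
    ∃ e : A, IsIdempotentElem e ∧ Ideal.Quotient.mk (Ring.jacobson A) e = f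

local notation "π" => Ideal.Quotient.mk (Ring.jacobson _)

namespace IsSemiperfect

variable {A : Type*} [Ring A] {e : A}

lemma isSemisimpleModule_quotient (hA : IsSemiperfect A) :
    IsSemisimpleModule A (A ⧸ Ring.jacobson A) :=
  have := hA.isSemisimpleRing_quotient
  isSemisimpleModule_quotient_of_isSemisimpleRing (Ring.jacobson A)

lemma exists_span_mk_eq (hA : IsSemiperfect A) (N : Submodule A (A ⧸ Ring.jacobson A)) :
    ∃ f : A, IsIdempotentElem f ∧ Submodule.span A {π f} = N := by
  have := hA.isSemisimpleRing_quotient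
  let I : Ideal (A ⧸ Ring.jacobson A) :=
    { N with
      smul_mem' := fun c x hx ↦ by
        obtain ⟨a, rfl⟩ := Ideal.Quotient.mk_surjective c
        exact N.smul_mem a hx }
  obtain ⟨f', hf', hI⟩ := IsSemisimpleRing.ideal_eq_span_idempotent I
  obtain ⟨f, hf, rfl⟩ := hA.exists_isIdempotentElem_mk_eq f' hf'
  refine ⟨f, hf, Submodule.ext fun x ↦ ?_⟩
  change _ ↔ x ∈ I
  rw [hI, Ideal.mem_span_singleton', Submodule.mem_span_singleton,
    Ideal.Quotient.mk_surjective.exists]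
  rfl

lemma isSimpleModule_span_mk (hA : IsSemiperfect A) (he : IsIdempotentElem e)
    (hind : IsIndecomposableModule A (Submodule.span A {e})) :
    IsSimpleModule A (Submodule.span A {π e}) := by
  have he0 : π e ≠ 0 := fun h ↦ hind.ne_zero_of_span_singleton <|
    eq_zero_of_mul_eq_self_of_mem_jacobson he.eq (Ideal.Quotient.eq_zero_iff_mem.1 h)
  rw [isSimpleModule_iff_isAtom]
  refine ⟨by simpa using he0, fun N hN ↦ ?_⟩
  obtain ⟨f, hf, rfl⟩ := hA.exists_span_mk_eq N
  have hfe : π f * π e = π f := by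
    obtain ⟨a, ha : π (a * e) = π f⟩ := Submodule.mem_span_singleton.1
      (hN.le (Submodule.mem_span_singleton_self (π f)))
    rw [← ha, ← map_mul, mul_assoc, he.eq]
  obtain ⟨g, hg, heg, hge, hgf⟩ := exists_isIdempotentElem_sub_mul_mem_jacobson he hf
    (by rwa [← Ideal.Quotient.eq, map_mul, eq_comm])
  rw [← Ideal.Quotient.eq, map_mul] at hgf
  obtain rfl | rfl := hind.eq_zero_or_eq_of_isIdempotentElem hg heg hge
  · rw [Submodule.span_singleton_eq_bot]
    calc π f = π f * π e * π f := by rw [hfe, (hf.map π).eq]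
      _ = 0 := by rw [mul_assoc, ← hgf, map_zero, mul_zero]
  · refine absurd ?_ hN.not_ge
    rw [Submodule.span_singleton_le_iff_mem, hgf, ← map_mul]
    exact Submodule.mem_span_singleton.2 ⟨_, rfl⟩

lemma exists_mul_eq_of_notMem_jacobson (hA : IsSemiperfect A) (he : IsIdempotentElem e)
    (hind : IsIndecomposableModule A (Submodule.span A {e})) {c : A} (hce : c * e = c)
    (hc : c ∉ Ring.jacobson A) : ∃ b, b * c = e := by
  have hatom := isSimpleModule_iff_isAtom.1 (hA.isSimpleModule_span_mk he hind)
  have hc_le : Submodule.span A {π c} ≤ Submodule.span A {π e} := by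
    rw [Submodule.span_singleton_le_iff_mem, ← hce]
    exact Submodule.mem_span_singleton.2 ⟨c, rfl⟩
  have hc_ne : Submodule.span A {π c} ≠ ⊥ := by
    rwa [Ne, Submodule.span_singleton_eq_bot, Ideal.Quotient.eq_zero_iff_mem]
  have he_mem : π e ∈ Submodule.span A {π c} :=
    (hatom.le_iff_eq hc_ne).1 hc_le ▸ Submodule.mem_span_singleton_self _
  obtain ⟨a, ha : π (a * c) = π e⟩ := Submodule.mem_span_singleton.1 he_mem
  obtain ⟨u, hu⟩ := isUnit_one_sub_of_mem_jacobson (Ideal.Quotient.eq.1 ha.symm)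
  have hue : u * e = a * c := by
    rw [hu, sub_mul, sub_mul, one_mul, he.eq, mul_assoc, hce]
    noncomm_ring
  exact ⟨↑u⁻¹ * a, by rw [mul_assoc, ← hue, Units.inv_mul_cancel_left]⟩

lemma exists_isSimpleModule_le_span (hA : IsSemiperfect A)
    (hsoc : IsEssentialSubmodule (socle A A)) (S : Submodule A (A ⧸ Ring.jacobson A))
    [hS : IsSimpleModule A S] :
    ∃ (e : A) (T : Submodule A A), IsIdempotentElem e ∧ Submodule.span A {π e} = S ∧
      T ≤ Submodule.span A {e} ∧ IsSimpleModule A T := by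
  obtain ⟨e, he, rfl⟩ := hA.exists_span_mk_eq S
  have hπe : π e ≠ 0 := Submodule.span_singleton_eq_bot.not.1 (isSimpleModule_iff_isAtom.1 hS).1
  have he0 : Submodule.span A {e} ≠ ⊥ :=
    Submodule.span_singleton_eq_bot.not.2 fun h ↦ hπe (h ▸ map_zero π)
  obtain ⟨T, hT, hTsimple⟩ := hsoc.exists_le_isSimpleModule he0
  exact ⟨e, T, he, rfl, hT, hTsimple⟩

end IsSemiperfect

lemma nonempty_span_mk_linearEquiv_of_mul_notMem {A : Type*} [Ring A] {e e' r : A}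
    [IsSimpleModule A (Submodule.span A {π e})] [IsSimpleModule A (Submodule.span A {π e'})]
    (hr : e * (r * e') ∉ Ring.jacobson A) :
    Nonempty (Submodule.span A {π e} ≃ₗ[A] Submodule.span A {π e'}) := by
  let ρ : A ⧸ Ring.jacobson A →ₗ[A] A ⧸ Ring.jacobson A :=
    Submodule.mapQ _ _ (LinearMap.toSpanSingleton A A (r * e')) fun _ ↦ Ideal.mul_mem_right _ _
  have hρ (a : A) : ρ (π a) = π (a * (r * e')) := rfl
  have hmap : ∀ x ∈ Submodule.span A {π e}, ρ x ∈ Submodule.span A {π e'} := fun x hx ↦ by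
    obtain ⟨a, rfl⟩ := Submodule.mem_span_singleton.1 hx
    refine Submodule.mem_span_singleton.2 ⟨a * e * r, ?_⟩
    change π (a * e * r * e') = ρ (π (a * e))
    rw [hρ, mul_assoc _ r]
  refine ⟨.ofBijective (ρ.restrict hmap) ?_⟩
  refine (LinearMap.bijective_or_eq_zero _).resolve_right fun h ↦ hr ?_
  rw [← Ideal.Quotient.eq_zero_iff_mem, ← hρ]
  exact congrArg Subtype.val
    (LinearMap.congr_fun h ⟨π e, Submodule.mem_span_singleton_self (π e)⟩)

lemma nonempty_span_mk_linearEquiv {A : Type u} [Ring A] [Module.Injective A A] {e e' : A}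
    (he : IsIdempotentElem e) (he' : IsIdempotentElem e')
    [IsSimpleModule A (Submodule.span A {π e})]
    [IsSimpleModule A (Submodule.span A {π e'})]
    {T T' : Submodule A A} [Nontrivial T] (hT : T ≤ Submodule.span A {e})
    (hT' : T' ≤ Submodule.span A {e'}) (φ : T ≃ₗ[A] T') :
    Nonempty (Submodule.span A {π e} ≃ₗ[A] Submodule.span A {π e'}) := by
  obtain ⟨t, ht0⟩ := exists_ne (0 : T)
  have hann (a : A) : a * t = 0 ↔ a * φ t = 0 := by
    have := φ.map_eq_zero_iff (x := a • t)
    rw [map_smul] at this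
    exact (Subtype.ext_iff.symm.trans this.symm).trans Subtype.ext_iff
  have hte : (t : A) * e = t := mul_eq_of_mem_span_of_isIdempotentElem he (hT t.2)
  have hte' : (φ t : A) * e' = φ t := mul_eq_of_mem_span_of_isIdempotentElem he' (hT' (φ t).2)
  obtain ⟨b, hb⟩ := exists_mul_eq_of_forall_mul_eq_zero fun a ↦ (hann a).1
  obtain ⟨b', hb'⟩ := exists_mul_eq_of_forall_mul_eq_zero fun a ↦ (hann a).2
  refine nonempty_span_mk_linearEquiv_of_mul_notMem (r := b) fun h ↦ ht0 <| Subtype.ext ?_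
  refine eq_zero_of_mul_eq_self_of_mem_jacobson (x := e * (b * e') * b') ?_
    (Ideal.mul_mem_right b' _ h)
  simp only [← mul_assoc, hte, hb, hte', hb']

open scoped Pointwise in
lemma mul_eq_zero_of_mem_ideal_pow {A : Type*} [Ring A] {I : Ideal A} {n : ℕ} {x y : A}
    (h : ∀ z ∈ (I : Set A) ^ n, z * x = 0) (hy : y ∈ I ^ n) : y * x = 0 := by
  induction n generalizing x y with
  | zero =>
    have hx : x = 0 := by simpa using h
    rw [hx, mul_zero]
  | succ n ih =>
    rw [Submodule.pow_succ] at hy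
    refine Submodule.smul_induction_on hy (fun z hz j hj ↦ ?_) fun a b ha hb ↦ ?_
    · rw [smul_eq_mul, mul_assoc]
      refine ih (fun w hw ↦ ?_) hz
      rw [← mul_assoc]
      exact h _ (pow_succ (I : Set A) n ▸ Set.mul_mem_mul hw hj)
    · rw [add_mul, ha, hb, add_zero]

lemma IsSemiprimary.isSemisimpleRing_quotient {A : Type*} [Ring A] (hA : IsSemiprimary A) :
    IsSemisimpleRing (A ⧸ Ring.jacobson A) := by
  have := hA.1
  have hle : (⊥ : TwoSidedIdeal A).jacobson.ringCon ≤
      RingCon.ker (Ideal.Quotient.mk (Ring.jacobson A)) := fun x y hxy ↦ by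
    rw [TwoSidedIdeal.rel_iff, ← TwoSidedIdeal.mem_asIdeal, TwoSidedIdeal.asIdeal_jacobson] at hxy
    rw [RingCon.ker_apply, Ideal.Quotient.eq]
    simpa [Ideal.jacobson_bot] using hxy
  refine RingHom.isSemisimpleRing_of_surjective (RingCon.lift _ _ hle) fun x ↦ ?_
  obtain ⟨a, rfl⟩ := Ideal.Quotient.mk_surjective x
  exact ⟨(a : RingCon.Quotient _), rfl⟩

lemma IsSemiprimary.isSemiprimaryRing_s6 {A : Type*} [Ring A] (hA : IsSemiprimary A) :
    IsSemiprimaryRing A where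
  isSemisimpleRing := hA.isSemisimpleRing_quotient
  isNilpotent := by
    obtain ⟨-, n, -, hn⟩ := hA
    rw [Ideal.jacobson_bot] at hn
    refine ⟨n, (Submodule.eq_bot_iff _).2 fun y hy ↦ ?_⟩
    rw [← mul_one y]
    refine mul_eq_zero_of_mem_ideal_pow (fun z hz ↦ ?_) hy
    obtain ⟨f, rfl⟩ := Set.mem_pow.1 hz
    rw [mul_one, hn _ fun i ↦ (f i).2]

lemma isSemiperfect_of_isSemiprimaryRing (A : Type*) [Ring A] [IsSemiprimaryRing A] :
    IsSemiperfect A where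
  isSemisimpleRing_quotient := inferInstance
  exists_isIdempotentElem_mk_eq f hf := by
    obtain ⟨n, hn⟩ := IsSemiprimaryRing.isNilpotent (R := A)
    refine exists_isIdempotentElem_eq_of_ker_isNilpotent (Ideal.Quotient.mk _)
      (fun x hx ↦ ⟨n, ?_⟩) f (Ideal.Quotient.mk_surjective f) hf
    rw [Ideal.mk_ker] at hx
    simpa [hn] using Ideal.pow_mem_pow hx n

lemma exists_isSimpleModule_of_isSemiprimaryRing (A M : Type*) [Ring A] [IsSemiprimaryRing A]
    [AddCommGroup M] [Module A M] [Nontrivial M] : ∃ T : Submodule A M, IsSimpleModule A T := by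
  suffices Nontrivial M → ∃ T : Submodule A M, IsSimpleModule A T from this ‹_›
  refine IsSemiprimaryRing.induction ℤ A M
    (P := fun M ↦ Nontrivial M → ∃ T : Submodule A M, IsSimpleModule A T)
    (fun M _ _ _ _ _ _ _ ↦ IsSemisimpleModule.exists_simple_submodule A M)
    fun M _ _ _ _ hN hQ _ ↦ ?_
  by_cases h : Ring.jacobson A • (⊤ : Submodule A M) = ⊥
  · have := Submodule.Quotient.nontrivial_iff.2 (h.trans_ne bot_ne_top)
    obtain ⟨T, hT⟩ := hQ this
    let φ := Submodule.quotEquivOfEqBot _ h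
    exact ⟨T.map φ.toLinearMap, .congr (T.equivMapOfInjective φ.toLinearMap φ.injective).symm⟩
  · obtain ⟨T, hT⟩ := hN (Submodule.nontrivial_iff_ne_bot.2 h)
    exact ⟨T.map (Submodule.subtype _),
      .congr (T.equivMapOfInjective _ (Submodule.injective_subtype _)).symm⟩

lemma isEssentialSubmodule_socle_of_isSemiprimaryRing (A M : Type*) [Ring A] [IsSemiprimaryRing A]
    [AddCommGroup M] [Module A M] : IsEssentialSubmodule (socle A M) := by
  refine isEssentialSubmodule_socle_of_forall_exists fun P hP ↦ ?_
  have : Nontrivial P := Submodule.nontrivial_iff_ne_bot.2 hP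
  obtain ⟨T, hT⟩ := exists_isSimpleModule_of_isSemiprimaryRing A P
  exact ⟨T.map P.subtype, P.map_subtype_le T,
    .congr (T.equivMapOfInjective _ P.injective_subtype).symm⟩

namespace IsSemiperfect

variable {A : Type u} [Ring A] [Module.Injective A A]

lemma exists_submodule_nonempty_linearEquiv (hA : IsSemiperfect A)
    (hsoc : IsEssentialSubmodule (socle A A)) (M : Type*) [AddCommGroup M] [Module A M]
    [IsSimpleModule A M] : ∃ T : Submodule A A, Nonempty (M ≃ₗ[A] T) := by
  have := hA.isSemisimpleModule_quotient
  choose! e T he heS hT hTsimple using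
    fun (S : Submodule A (A ⧸ Ring.jacobson A)) (_ : IsSimpleModule A S) ↦
      hA.exists_isSimpleModule_le_span hsoc S
  have hT_iso (S : Submodule A (A ⧸ Ring.jacobson A)) (hS : IsSimpleModule A S) :
      ∃ S' : Submodule A (A ⧸ Ring.jacobson A), Nonempty (T S ≃ₗ[A] S') :=
    have := hTsimple S hS
    exists_submodule_quotient_jacobson_nonempty_linearEquiv (T S)
  choose! S' φ using hT_iso
  obtain ⟨S, ⟨ψ⟩⟩ := exists_submodule_quotient_jacobson_nonempty_linearEquiv (A := A) M
  have : IsSimpleModule A S := IsSimpleModule.congr ψ.symm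
  have hinj (S₁ S₂ : Submodule A (A ⧸ Ring.jacobson A)) (h₁ : IsSimpleModule A S₁)
      (h₂ : IsSimpleModule A S₂) :
      Nonempty (S' S₁ ≃ₗ[A] S' S₂) → Nonempty (S₁ ≃ₗ[A] S₂) := fun ⟨ρ⟩ ↦ by
    have : Nontrivial (T S₁) := (hTsimple S₁ h₁).nontrivial
    have : IsSimpleModule A (Submodule.span A {π (e S₁)}) := (heS S₁ h₁).symm ▸ h₁
    have : IsSimpleModule A (Submodule.span A {π (e S₂)}) := (heS S₂ h₂).symm ▸ h₂
    obtain ⟨χ⟩ := nonempty_span_mk_linearEquiv (he S₁ h₁) (he S₂ h₂) (hT S₁ h₁) (hT S₂ h₂)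
      (((φ S₁ h₁).some.trans ρ).trans (φ S₂ h₂).some.symm)
    exact ⟨(LinearEquiv.ofEq _ _ (heS S₁ h₁)).symm.trans
      (χ.trans (LinearEquiv.ofEq _ _ (heS S₂ h₂)))⟩
  obtain ⟨S₁, hS₁, ⟨χ⟩⟩ := exists_nonempty_linearEquiv_of_injective_on_simple S'
    (fun S₁ h₁ ↦ have := hTsimple S₁ h₁; .congr (φ S₁ h₁).some.symm) hinj S
  exact ⟨T S₁, ⟨ψ.trans (χ.trans (φ S₁ hS₁).some.symm)⟩⟩

lemma exists_ne_zero_mul_eq_forall_mul_eq_zero (hA : IsSemiperfect A)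
    (hsoc : IsEssentialSubmodule (socle A A)) {e : A} (he : IsIdempotentElem e)
    (hind : IsIndecomposableModule A (Submodule.span A {e})) :
    ∃ s : A, s ≠ 0 ∧ e * s = s ∧ ∀ a ∈ Ring.jacobson A, a * s = 0 := by
  -- `s` is the image of the generator of `Ae / Je` under an embedding into `A`.
  have := hA.isSimpleModule_span_mk he hind
  obtain ⟨T, ⟨φ⟩⟩ := hA.exists_submodule_nonempty_linearEquiv hsoc (Submodule.span A {π e})
  let g : Submodule.span A {π e} := ⟨π e, Submodule.mem_span_singleton_self _⟩
  have hg (a : A) : a • g = 0 ↔ a * φ g = 0 := by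
    rw [← φ.map_eq_zero_iff, map_smul]
    exact Subtype.ext_iff
  have hπe : π e ≠ 0 := Submodule.span_singleton_eq_bot.not.1 (isSimpleModule_iff_isAtom.1 this).1
  refine ⟨φ g, ?_, ?_, fun a ha ↦ (hg a).1 <| Subtype.ext ?_⟩
  · rw [Ne, Submodule.coe_eq_zero, φ.map_eq_zero_iff]
    exact fun h ↦ hπe (congrArg Subtype.val h)
  · rw [← sub_eq_zero, ← sub_one_mul, ← hg]
    refine Subtype.ext ?_
    change π ((e - 1) * e) = 0
    rw [sub_one_mul, he.eq, sub_self, map_zero]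
  · change π (a * e) = 0
    rw [Ideal.Quotient.eq_zero_iff_mem]
    exact Ideal.mul_mem_right e _ ha

lemma exists_forall_exists_mul_eq (hA : IsSemiperfect A)
    (hsoc : IsEssentialSubmodule (socle A A)) {e : A} (he : IsIdempotentElem e)
    (hind : IsIndecomposableModule A (Submodule.span A {e})) :
    ∃ s : A, s ≠ 0 ∧ e * s = s ∧ ∀ x, x ≠ 0 → e * x = x → ∃ b, x * b = s := by
  obtain ⟨s, hs0, hes, hJs⟩ := hA.exists_ne_zero_mul_eq_forall_mul_eq_zero hsoc he hind
  refine ⟨s, hs0, hes, fun x hx0 hex ↦ exists_mul_eq_of_forall_mul_eq_zero fun a hax ↦ ?_⟩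
  have hae : a * e ∈ Ring.jacobson A := by
    by_contra hae
    obtain ⟨b, hb⟩ :=
      hA.exists_mul_eq_of_notMem_jacobson he hind (by rw [mul_assoc, he.eq]) hae
    apply hx0
    rw [← hex, ← hb, mul_assoc, mul_assoc, hex, hax, mul_zero]
  rw [← hes, ← mul_assoc, hJs _ hae]

end IsSemiperfect

theorem socle_eA_simple_essential_of_selfinjective_semiprimary_general
    (A : Type u) [Ring A] (hA : IsSemiperfect A) (hsoc : IsEssentialSubmodule (socle A A))
    (hinj : Module.Injective A A) (e : A) (he : IsIdempotentElem e)
    (hind : IsIndecomposableModule A (Submodule.span A {e})) :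
    IsSimpleModule Aᵐᵒᵖ (socle Aᵐᵒᵖ (Submodule.span Aᵐᵒᵖ {e})) ∧
    IsEssentialSubmodule (socle Aᵐᵒᵖ (Submodule.span Aᵐᵒᵖ {e})) := by
  obtain ⟨s, hs0, hes, hs⟩ := hA.exists_forall_exists_mul_eq hsoc he hind
  let s' : Submodule.span Aᵐᵒᵖ {e} := ⟨s, Submodule.mem_span_singleton.2 ⟨.op s, hes⟩⟩
  refine isSimpleModule_socle_and_isEssentialSubmodule_of_forall_le
    (T := Submodule.span Aᵐᵒᵖ {s'}) ?_ fun P hP ↦ ?_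
  · simpa [s'] using hs0
  · obtain ⟨x, hxP, hx0⟩ := P.ne_bot_iff.1 hP
    obtain ⟨b, hb⟩ := hs x (by simpa using hx0) (mul_eq_of_mem_span_op_of_isIdempotentElem he x.2)
    have hs' : MulOpposite.op b • x = s' := Subtype.ext hb
    rw [Submodule.span_singleton_le_iff_mem, ← hs']
    exact P.smul_mem _ hxP

/-- For a left self-injective semiprimary ring `A` and an idempotent `e` such that the left
`A`-module `Ae` is indecomposable, the right `A`-module `eA` has a simple socle, which is
moreover essential in `eA`. -/
theorem socle_eA_simple_essential_of_selfinjective_semiprimary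
    (A : Type u) [Ring A] (hsp : IsSemiprimary A) (hinj : Module.Injective A A)
    (e : A) (he : IsIdempotentElem e)
    (hind : IsIndecomposableModule A (Submodule.span A {e})) :
    IsSimpleModule Aᵐᵒᵖ (socle Aᵐᵒᵖ (Submodule.span Aᵐᵒᵖ {e})) ∧
    IsEssentialSubmodule (socle Aᵐᵒᵖ (Submodule.span Aᵐᵒᵖ {e})) := by
  have := hsp.isSemiprimaryRing_s6
  exact socle_eA_simple_essential_of_selfinjective_semiprimary_general A
    (isSemiperfect_of_isSemiprimaryRing A) (isEssentialSubmodule_socle_of_isSemiprimaryRing A A)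
    hinj e he hind
end
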